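/- The class of finite directed graphs whose edge relation is a strict linear order satisfies all three of the following: (a) it is definable by a single first-order sentence over the signature with one binary relation symbol E; (b) there exists a countable family (φ_k)_{k∈ℕ} of C² sentences such that a finite directed graph G belongs to the class if and only if G ⊨ φ_k for every k ∈ ℕ; (c) it is not definable by any single C² sentence. -/

import Mathlib

/-- The two variables of the logic `C²`. -/
inductive C2Var : Type
  | x : C2Var
  | y : C2Var
deriving DecidableEq

/-- Formulas of `C²`, the two-variable fragment of first-order logic with counting, over
the signature with one binary relation symbol `E` and unary predicates `P₁,…,P_d`.
`exN k v φ` is the counting quantifier `∃_k v. φ` ("at least `k` elements"). -/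
inductive C2 (d : ℕ) : Type
  | eq : C2Var → C2Var → C2 d
  | edge : C2Var → C2Var → C2 d
  | pred : Fin d → C2Var → C2 d
  | not : C2 d → C2 d
  | and : C2 d → C2 d → C2 d
  | or : C2 d → C2 d → C2 d
  | exN : ℕ → C2Var → C2 d → C2 d

/-- Satisfaction of a `C²` formula in a finite directed labelled graph `(V, E, lab)`
under an assignment `a` of the two variables. -/
def C2.sat {d : ℕ} {V : Type} [Fintype V] (E : V → V → Prop) (lab : V → Fin d → Bool) :
    C2 d → (C2Var → V) → Prop
  | .eq s t, a => a s = a t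
  | .edge s t, a => E (a s) (a t)
  | .pred i s, a => lab (a s) i = true
  | .not φ, a => ¬ C2.sat E lab φ a
  | .and φ ψ, a => C2.sat E lab φ a ∧ C2.sat E lab ψ a
  | .or φ ψ, a => C2.sat E lab φ a ∨ C2.sat E lab ψ a
  | .exN k w φ, a => k ≤ Nat.card {u : V | C2.sat E lab φ (Function.update a w u)}

/-- Quantifier nesting depth of a `C²` formula. -/
def C2.depth {d : ℕ} : C2 d → ℕ
  | .eq _ _ => 0
  | .edge _ _ => 0
  | .pred _ _ => 0
  | .not φ => φ.depth
  | .and φ ψ => max φ.depth ψ.depth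
  | .or φ ψ => max φ.depth ψ.depth
  | .exN _ _ φ => φ.depth + 1

/-- Counting rank of a `C²` formula: the maximal `k` occurring in a counting
quantifier `∃_k`. -/
def C2.rank {d : ℕ} : C2 d → ℕ
  | .eq _ _ => 0
  | .edge _ _ => 0
  | .pred _ _ => 0
  | .not φ => φ.rank
  | .and φ ψ => max φ.rank ψ.rank
  | .or φ ψ => max φ.rank ψ.rank
  | .exN k _ φ => max k φ.rank

/-- Free variables of a `C²` formula. -/
def C2.freeVars {d : ℕ} : C2 d → Finset C2Var
  | .eq s t => {s, t}
  | .edge s t => {s, t}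
  | .pred _ s => {s}
  | .not φ => φ.freeVars
  | .and φ ψ => φ.freeVars ∪ ψ.freeVars
  | .or φ ψ => φ.freeVars ∪ ψ.freeVars
  | .exN _ w φ => φ.freeVars.erase w

/-- A strict linear order on a type `V`: an irreflexive, transitive and total
binary relation. -/
def IsStrictLinearOrderRel {V : Type} (E : V → V → Prop) : Prop :=
  (∀ v, ¬ E v v) ∧ (∀ u v w, E u v → E v w → E u w) ∧ (∀ u v : V, u ≠ v → E u v ∨ E v u)

open FirstOrder

/-- A directed graph `(V, E)` as a structure for the first-order language with one binary
relation symbol. -/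
def dirStructure {V : Type} (E : V → V → Prop) : Language.graph.Structure V where
  RelMap | .adj => fun x => E (x 0) (x 1)

/-- The empty labelling (dimension 0). -/
def noLab {V : Type} : V → Fin 0 → Bool := fun _ i => i.elim0

/-!
The family in (b) says that the edge relation is irreflexive and total and, for each `k`, that at
most one vertex has in-degree `k`. On `n` vertices the in-degrees are then `0, …, n - 1`, and by
induction on the in-degree of `v` the in-neighbours of `v` are exactly the vertices of smaller
in-degree.

For (c), a sentence of depth `q` with counting quantifiers up to `c` cannot tell the order on
`2 * q * c + 3` points from the tournament obtained by making its three middle points a cycle. With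
`t` quantifiers still to come, a vertex is described up to equivalence by its position if it is
among the first or last `t * c`, and all vertices between these are alike. A vertex that is alike
to others with `t + 1` quantifiers to come has, on either side, at least `c` vertices that are alike
with `t` quantifiers to come, so counting up to `c` does not separate the two structures.
-/

section FirstOrderDefinability

/-- The first-order axioms of a strict linear order: irreflexivity, transitivity, totality. -/
def strictLinearOrderSentence : Language.graph.Sentence :=
  Language.adj.irreflexive ⊓ (Language.adj.transitive ⊓
    ∀' ∀' (((&0 : Language.graph.Term (Empty ⊕ Fin 2)) =' &1) ⊔
      (Language.adj.boundedFormula₂ (&0) (&1) ⊔ Language.adj.boundedFormula₂ (&1) (&0))))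

lemma realize_strictLinearOrderSentence {V : Type} (E : V → V → Prop) :
    letI := dirStructure E
    strictLinearOrderSentence.Realize V ↔ IsStrictLinearOrderRel E := by
  let := dirStructure E
  have relMap_adj (u v : V) : Language.Structure.RelMap Language.adj ![u, v] ↔ E u v := Iff.rfl
  simp only [strictLinearOrderSentence, Language.Relations.irreflexive,
    Language.Relations.transitive, Language.Sentence.Realize, Language.Formula.Realize,
    Language.BoundedFormula.realize_inf, Language.BoundedFormula.realize_all,
    Language.BoundedFormula.realize_not, Language.BoundedFormula.realize_imp,
    Language.BoundedFormula.realize_sup, Language.BoundedFormula.realize_rel₂,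
    Language.BoundedFormula.realize_bdEqual, relMap_adj, or_iff_not_imp_left (a := _ = _)]
  exact Iff.rfl

end FirstOrderDefinability

section InDegree

variable {V : Type*} {E : V → V → Prop}

/-- The in-degree of a vertex; on an infinite in-neighbourhood it takes the junk value `0`. -/
noncomputable def inDegree (E : V → V → Prop) (v : V) : ℕ := {u | E u v}.ncard

lemma inDegree_lt_card [Finite V] (irrefl : ∀ v, ¬ E v v) (v : V) : inDegree E v < Nat.card V :=
  Set.ncard_lt_card fun h => irrefl v (h.ge (Set.mem_univ v))

lemma ncard_setOf_lt_of_injective {f : V → ℕ} (hf : Function.Injective f)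
    (hlt : ∀ v, f v < Nat.card V) {k : ℕ} (hk : k ≤ Nat.card V) : {v | f v < k}.ncard = k := by
  have hrange : Set.range f = Set.Iio (Nat.card V) :=
    Set.eq_of_subset_of_ncard_le (Set.range_subset_iff.2 hlt)
      (by simp [Set.ncard_range_of_injective hf, Set.ncard_eq_toFinset_card'])
  calc (f ⁻¹' Set.Iio k).ncard = (Set.Iio k).ncard :=
        Set.ncard_preimage_of_injective_subset_range hf (hrange ▸ Set.Iio_subset_Iio hk)
    _ = k := by simp [Set.ncard_eq_toFinset_card']

lemma inDegree_lt_of_edge [Finite V] (irrefl : ∀ v, ¬ E v v)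
    (total : ∀ u v, u ≠ v → E u v ∨ E v u) (inj : Function.Injective (inDegree E)) {u v : V}
    (huv : E u v) : inDegree E u < inDegree E v := by
  induction hk : inDegree E v using Nat.strong_induction_on generalizing u v with
  | _ k ih =>
    subst hk
    have hsub : {w | inDegree E w < inDegree E v} ⊆ {w | E w v} := by
      intro w (hw : inDegree E w < inDegree E v)
      have hwv : ¬ E v w := fun hvw => lt_asymm hw (ih _ hw hvw rfl)
      exact (total w v (ne_of_apply_ne _ hw.ne)).resolve_right hwv
    have heq : {w | inDegree E w < inDegree E v} = {w | E w v} :=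
      Set.eq_of_subset_of_ncard_le hsub (ncard_setOf_lt_of_injective inj
        (inDegree_lt_card irrefl) (inDegree_lt_card irrefl v).le).ge
    exact heq.ge huv

end InDegree

lemma IsStrictLinearOrderRel.inDegree_injective {V : Type} [Finite V] {E : V → V → Prop}
    (hE : IsStrictLinearOrderRel E) : Function.Injective (inDegree E) := by
  obtain ⟨irrefl, trans, total⟩ := hE
  have inDegree_lt {u v : V} (huv : E u v) : inDegree E u < inDegree E v :=
    Set.ncard_lt_ncard ⟨fun w hw => trans _ _ _ hw huv, fun h => irrefl u (h huv)⟩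
  intro u v huv
  by_contra hne
  exact (total u v hne).elim (fun h => (inDegree_lt h).ne huv) (fun h => (inDegree_lt h).ne' huv)

lemma isStrictLinearOrderRel_iff_inDegree_injective {V : Type} [Finite V] {E : V → V → Prop} :
    IsStrictLinearOrderRel E ↔ (∀ v, ¬ E v v) ∧ (∀ u v, u ≠ v → E u v ∨ E v u) ∧
      Function.Injective (inDegree E) := by
  refine ⟨fun h => ⟨h.1, h.2.2, h.inDegree_injective⟩, fun ⟨irrefl, total, inj⟩ => ?_⟩
  have inDegree_lt {u v : V} : E u v → inDegree E u < inDegree E v :=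
    inDegree_lt_of_edge irrefl total inj
  refine ⟨irrefl, fun u v w huv hvw => ?_, total⟩
  have huw : inDegree E u < inDegree E w := (inDegree_lt huv).trans (inDegree_lt hvw)
  exact (total u w (ne_of_apply_ne _ huw.ne)).resolve_right fun h => lt_asymm huw (inDegree_lt h)

namespace C2

variable {d : ℕ}

/-- Universal quantification `∀ v. φ`, expressed as `¬ ∃₁ v. ¬ φ`. -/
def all (v : C2Var) (φ : C2 d) : C2 d := .not (.exN 1 v (.not φ))

/-- The formula with free variable `x` saying that the in-degree of `x` is `k`. -/
def inDegreeEq (k : ℕ) : C2 d :=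
  .and (.exN k .y (.edge .y .x)) (.not (.exN (k + 1) .y (.edge .y .x)))

/-- The sentence saying that the edge relation is irreflexive and total and that at most one vertex
has in-degree `k`. -/
def totalAtMostOneInDegreeEq (k : ℕ) : C2 d :=
  .and (all .x (.not (.edge .x .x)))
    (.and (all .x (all .y (.or (.eq .x .y) (.or (.edge .x .y) (.edge .y .x)))))
      (.not (.exN 2 .x (inDegreeEq k))))

lemma freeVars_totalAtMostOneInDegreeEq (k : ℕ) :
    (totalAtMostOneInDegreeEq k : C2 d).freeVars = ∅ := by
  simp only [totalAtMostOneInDegreeEq, inDegreeEq, all, freeVars]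
  decide

variable {V : Type} [Fintype V] {E : V → V → Prop} {lab : V → Fin d → Bool}

lemma sat_exN {k : ℕ} {v : C2Var} {φ : C2 d} {a : C2Var → V} :
    sat E lab (.exN k v φ) a ↔ k ≤ {u | sat E lab φ (Function.update a v u)}.ncard :=
  Iff.rfl

lemma sat_all {v : C2Var} {φ : C2 d} {a : C2Var → V} :
    sat E lab (all v φ) a ↔ ∀ u, sat E lab φ (Function.update a v u) := by
  change ¬ 0 < Set.ncard {u | ¬ sat E lab φ (Function.update a v u)} ↔ _
  rw [Set.ncard_pos, Set.not_nonempty_iff_eq_empty, Set.eq_empty_iff_forall_notMem]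
  exact forall_congr' fun u => not_not

lemma sat_inDegreeEq {k : ℕ} {a : C2Var → V} :
    sat E lab (inDegreeEq k) a ↔ inDegree E (a .x) = k := by
  change k ≤ inDegree E (a .x) ∧ ¬ k + 1 ≤ inDegree E (a .x) ↔ _
  omega

lemma sat_totalAtMostOneInDegreeEq {k : ℕ} {a : C2Var → V} :
    sat E lab (totalAtMostOneInDegreeEq k) a ↔ (∀ v, ¬ E v v) ∧
      (∀ u v, u ≠ v → E u v ∨ E v u) ∧ ∀ u v, inDegree E u = k → inDegree E v = k → u = v := by
  refine and_congr sat_all (and_congr ?_ ?_)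
  · simp only [sat_all, or_iff_not_imp_left (a := _ = _), sat]
    exact Iff.rfl
  · change ¬ 1 < Set.ncard {u | sat E lab (inDegreeEq k) (Function.update a .x u)} ↔ _
    simp only [sat_inDegreeEq, Function.update_self, not_lt]
    rw [Set.ncard_le_one_iff]
    exact ⟨fun h u v => h, fun h u v => h u v⟩

lemma forall_sat_totalAtMostOneInDegreeEq :
    (∀ (k : ℕ) (a : C2Var → V), sat E lab (totalAtMostOneInDegreeEq k) a) ↔
      IsStrictLinearOrderRel E := by
  simp only [sat_totalAtMostOneInDegreeEq, isStrictLinearOrderRel_iff_inDegree_injective]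
  refine ⟨fun h => ?_, fun h k _ => ⟨h.1, h.2.1, fun u v hu hv => h.2.2 (hu.trans hv.symm)⟩⟩
  exact ⟨fun v => (h 0 fun _ => v).1 v, fun u => (h 0 fun _ => u).2.1 u,
    fun u v huv => (h (inDegree E v) fun _ => v).2.2 u v huv rfl⟩

end C2

/-- A tournament: between any two distinct vertices there is exactly one edge, and there are no
loops. -/
structure IsTournament {V : Type*} (E : V → V → Prop) : Prop where
  irrefl : ∀ v, ¬ E v v
  edge_iff_not_edge : ∀ {u v}, u ≠ v → (E u v ↔ ¬ E v u)

lemma IsTournament.edge_swap_iff {V V' : Type*} {E : V → V → Prop} {E' : V' → V' → Prop}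
    (hE : IsTournament E) (hE' : IsTournament E') {a b : V} {a' b' : V'} (hne : a ≠ b)
    (hne' : a' ≠ b') (h : E a b ↔ E' a' b') : E b a ↔ E' b' a' := by
  rw [hE.edge_iff_not_edge hne.symm, hE'.edge_iff_not_edge hne'.symm, h]

section Game

variable {n c D D' M : ℕ} {E E' : Fin n → Fin n → Prop} {a b a' b' : Fin n}

/-- The vertices that have at least `D` vertices of `Fin n` on either side. -/
def IsMiddle (D : ℕ) (i : Fin n) : Prop := D ≤ i.1 ∧ i.1 + D < n

lemma IsMiddle.mono (h : D' ≤ D) (ha : IsMiddle D a) : IsMiddle D' a := by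
  unfold IsMiddle at *
  omega

/-- Vertices that look alike at margin `D`: they coincide or both lie in the middle. -/
def Alike (D : ℕ) (i j : Fin n) : Prop := i = j ∨ IsMiddle D i ∧ IsMiddle D j

lemma Alike.symm (h : Alike D a a') : Alike D a' a := h.imp Eq.symm And.symm

lemma Alike.mono (hD : D' ≤ D) (h : Alike D a a') : Alike D' a a' :=
  h.imp_right (And.imp (IsMiddle.mono hD) (IsMiddle.mono hD))

/-- A tournament on `Fin n` that agrees with the order except possibly between middle vertices. -/
structure IsOrderOffMiddle (M : ℕ) (E : Fin n → Fin n → Prop) : Prop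
    extends IsTournament E where
  edge_iff_lt : ∀ {i j}, ¬ (IsMiddle M i ∧ IsMiddle M j) → (E i j ↔ i < j)

/-- The winning positions of Duplicator at margin `D` in the two-pebble game on `E` and `E'`: the
pebbles on `a` and `b` in `E` correspond to those on `a'` and `b'` in `E'`. -/
structure PairAlike (D : ℕ) (E E' : Fin n → Fin n → Prop) (a b a' b' : Fin n) : Prop where
  left : Alike D a a'
  right : Alike D b b'
  eq_iff : a = b ↔ a' = b'
  edge_iff : E a b ↔ E' a' b'
  edge_swap_iff : E b a ↔ E' b' a'

lemma PairAlike.symm (h : PairAlike D E E' a b a' b') : PairAlike D E' E a' b' a b :=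
  ⟨h.left.symm, h.right.symm, h.eq_iff.symm, h.edge_iff.symm, h.edge_swap_iff.symm⟩

lemma PairAlike.swap (h : PairAlike D E E' a b a' b') : PairAlike D E E' b a b' a' :=
  ⟨h.right, h.left, by simpa only [eq_comm] using h.eq_iff, h.edge_swap_iff, h.edge_iff⟩

lemma PairAlike.of_ne (hE : IsTournament E) (hE' : IsTournament E') (ha : Alike D a a')
    (hb : Alike D b b') (hne : a ≠ b) (hne' : a' ≠ b') (h : E a b ↔ E' a' b') :
    PairAlike D E E' a b a' b' :=
  ⟨ha, hb, iff_of_false hne hne', h, hE.edge_swap_iff hE' hne hne' h⟩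

lemma PairAlike.diag (hE : IsTournament E) (hE' : IsTournament E') (ha : Alike D a a') :
    PairAlike D E E' a a a' a' :=
  ⟨ha, ha, iff_of_true rfl rfl, iff_of_false (hE.irrefl a) (hE'.irrefl a'),
    iff_of_false (hE.irrefl a) (hE'.irrefl a')⟩

/-- Duplicator's admissible answers, next to the pebble on `a'`, to Spoiler's choice of a set `S` of
vertices next to the pebble on `a`. -/
def answers (D : ℕ) (E E' : Fin n → Fin n → Prop) (a a' : Fin n) (S : Set (Fin n)) :
    Set (Fin n) :=
  {b' | ∃ b ∈ S, PairAlike D E E' a b a' b'}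

lemma ncard_setOf_val_mem_Ico {s : ℕ} (h : s + c ≤ n) :
    {i : Fin n | i.1 ∈ Set.Ico s (s + c)}.ncard = c := by
  have hrange : Set.Ico s (s + c) ⊆ Set.range (Fin.val : Fin n → ℕ) :=
    fun i hi => ⟨⟨i, hi.2.trans_le h⟩, rfl⟩
  calc {i : Fin n | i.1 ∈ Set.Ico s (s + c)}.ncard = (Set.Ico s (s + c)).ncard :=
        Set.ncard_preimage_of_injective_subset_range Fin.val_injective hrange
    _ = c := by simp [Set.ncard_eq_toFinset_card']

/-- `p` selects the out-neighbours (`True`) or the in-neighbours (`False`) of `a`. -/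
lemma IsOrderOffMiddle.le_ncard_middle_edge_iff (hE : IsOrderOffMiddle M E) (hM : D + c ≤ M)
    (ha : IsMiddle (D + c) a) (p : Prop) :
    c ≤ {b | IsMiddle D b ∧ a ≠ b ∧ (E a b ↔ p)}.ncard := by
  have edge_iff_lt {b : Fin n} (hb : ¬ IsMiddle (D + c) b) : E a b ↔ a < b :=
    hE.edge_iff_lt fun h => hb (h.2.mono hM)
  obtain ⟨s, hs, hsub⟩ : ∃ s, s + c ≤ n ∧ {b : Fin n | b.1 ∈ Set.Ico s (s + c)} ⊆
      {b | IsMiddle D b ∧ a ≠ b ∧ (E a b ↔ p)} := by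
    unfold IsMiddle at *
    by_cases hp : p
    · refine ⟨n - D - c, by omega, fun b ⟨hb₁, hb₂⟩ => ⟨by omega, by omega, ?_⟩⟩
      rw [edge_iff_lt (by omega), Fin.lt_def]
      exact iff_of_true (by omega) hp
    · refine ⟨D, by omega, fun b ⟨hb₁, hb₂⟩ => ⟨by omega, by omega, ?_⟩⟩
      rw [edge_iff_lt (by omega), Fin.lt_def]
      exact iff_of_false (by omega) hp
  exact (ncard_setOf_val_mem_Ico hs).ge.trans (Set.ncard_le_ncard hsub)

lemma subset_answers_of_not_isMiddle (hE : IsOrderOffMiddle M E) (hE' : IsOrderOffMiddle M E')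
    (ha : ¬ IsMiddle M a) (S : Set (Fin n)) : S ⊆ answers D E E' a a S := fun b hb =>
  ⟨b, hb, .inl rfl, .inl rfl, Iff.rfl,
    (hE.edge_iff_lt fun h => ha h.1).trans (hE'.edge_iff_lt fun h => ha h.1).symm,
    (hE.edge_iff_lt fun h => ha h.2).trans (hE'.edge_iff_lt fun h => ha h.2).symm⟩

lemma middle_subset_answers (hE : IsTournament E) (hE' : IsTournament E') (ha : Alike D a a')
    {S : Set (Fin n)} (hbS : b ∈ S) (hb : IsMiddle D b) (hne : a ≠ b) :
    {b' | IsMiddle D b' ∧ a' ≠ b' ∧ (E' a' b' ↔ E a b)} ⊆ answers D E E' a a' S :=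
  fun _ ⟨hb', hne', h⟩ => ⟨b, hbS, .of_ne hE hE' ha (.inr ⟨hb, hb'⟩) hne hne' h.symm⟩

lemma image_swap_subset_answers (hE : IsOrderOffMiddle M E) (hE' : IsOrderOffMiddle M E')
    (hM : D ≤ M) (ha : IsMiddle D a) (ha' : IsMiddle D a') {S : Set (Fin n)}
    (hS : ∀ b ∈ S, a ≠ b → ¬ IsMiddle D b) :
    Equiv.swap a a' '' S ⊆ answers D E E' a a' S := by
  rintro _ ⟨b, hb, rfl⟩
  refine ⟨b, hb, ?_⟩
  obtain rfl | hne := eq_or_ne a b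
  · rw [Equiv.swap_apply_left]
    exact .diag hE.toIsTournament hE'.toIsTournament (.inr ⟨ha, ha'⟩)
  have hbD : ¬ IsMiddle D b := hS b hb hne
  have hne' : a' ≠ b := by rintro rfl; exact hbD ha'
  have hbM : ¬ IsMiddle M b := fun h => hbD (h.mono hM)
  rw [Equiv.swap_apply_of_ne_of_ne hne.symm hne'.symm]
  refine .of_ne hE.toIsTournament hE'.toIsTournament (.inr ⟨ha, ha'⟩) (.inl rfl) hne hne' ?_
  rw [hE.edge_iff_lt fun h => hbM h.2, hE'.edge_iff_lt fun h => hbM h.2, Fin.lt_def, Fin.lt_def]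
  unfold IsMiddle at *
  omega

lemma min_ncard_le_ncard_answers (hE : IsOrderOffMiddle M E) (hE' : IsOrderOffMiddle M E')
    (hM : D + c ≤ M) (ha : Alike (D + c) a a') (S : Set (Fin n)) :
    min c S.ncard ≤ (answers D E E' a a' S).ncard := by
  by_cases hmid : IsMiddle (D + c) a ∧ IsMiddle (D + c) a'
  · have hD : D ≤ D + c := Nat.le_add_right D c
    by_cases hS : ∃ b ∈ S, a ≠ b ∧ IsMiddle D b
    · obtain ⟨b, hbS, hne, hb⟩ := hS
      exact (min_le_left _ _).trans <| (hE'.le_ncard_middle_edge_iff hM hmid.2 (E a b)).trans <|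
        Set.ncard_le_ncard <|
          middle_subset_answers hE.toIsTournament hE'.toIsTournament (ha.mono hD) hbS hb hne
    · push Not at hS
      calc min c S.ncard ≤ S.ncard := min_le_right _ _
        _ = (Equiv.swap a a' '' S).ncard :=
          (Set.ncard_image_of_injective S (Equiv.swap a a').injective).symm
        _ ≤ (answers D E E' a a' S).ncard := Set.ncard_le_ncard <|
          image_swap_subset_answers hE hE' (hD.trans hM) (hmid.1.mono hD) (hmid.2.mono hD) hS
  · obtain rfl : a = a' := ha.resolve_right hmid
    have haM : ¬ IsMiddle M a := fun h => hmid ⟨h.mono hM, h.mono hM⟩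
    exact (min_le_right _ _).trans <|
      Set.ncard_le_ncard (subset_answers_of_not_isMiddle hE hE' haM S)

lemma le_ncard_of_answers_subset (hE : IsOrderOffMiddle M E) (hE' : IsOrderOffMiddle M E')
    (hM : D + c ≤ M) (ha : Alike (D + c) a a') {k : ℕ} (hk : k ≤ c) {S S' : Set (Fin n)}
    (hkS : k ≤ S.ncard) (hS : answers D E E' a a' S ⊆ S') : k ≤ S'.ncard :=
  (le_min hk hkS).trans <|
    (min_ncard_le_ncard_answers hE hE' hM ha S).trans (Set.ncard_le_ncard hS)

lemma PairAlike.sat {d : ℕ} {l : Fin d → Bool} {φ : C2 d} (hrank : φ.rank ≤ c)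
    (hD : φ.depth * c ≤ D) (hM : D ≤ M) (hE : IsOrderOffMiddle M E)
    (hE' : IsOrderOffMiddle M E') {α α' : C2Var → Fin n}
    (h : PairAlike D E E' (α .x) (α .y) (α' .x) (α' .y)) (hsat : C2.sat E (fun _ => l) φ α) :
    C2.sat E' (fun _ => l) φ α' := by
  induction φ generalizing D E E' α α' with
  | eq s t =>
    cases s <;> cases t
    exacts [rfl, h.eq_iff.1 hsat, h.swap.eq_iff.1 hsat, rfl]
  | edge s t =>
    cases s <;> cases t
    exacts [(hE.irrefl _ hsat).elim, h.edge_iff.1 hsat, h.edge_swap_iff.1 hsat,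
      (hE.irrefl _ hsat).elim]
  | pred => exact hsat
  | not φ ih => exact fun hsat' => hsat (ih hrank hD hM hE' hE h.symm hsat')
  | and φ ψ ihφ ihψ =>
    simp only [C2.rank, C2.depth, max_le_iff, max_mul] at hrank hD
    exact ⟨ihφ hrank.1 hD.1 hM hE hE' h hsat.1, ihψ hrank.2 hD.2 hM hE hE' h hsat.2⟩
  | or φ ψ ihφ ihψ =>
    simp only [C2.rank, C2.depth, max_le_iff, max_mul] at hrank hD
    exact hsat.imp (ihφ hrank.1 hD.1 hM hE hE' h) (ihψ hrank.2 hD.2 hM hE hE' h)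
  | exN k w φ ih =>
    simp only [C2.rank, C2.depth, max_le_iff, Nat.succ_mul] at hrank hD
    obtain ⟨D, rfl⟩ := Nat.exists_eq_add_of_le' ((Nat.le_add_left _ _).trans hD)
    have hD' : φ.depth * c ≤ D := Nat.le_of_add_le_add_right hD
    have hDM : D ≤ M := (Nat.le_add_right _ _).trans hM
    rw [C2.sat_exN] at hsat ⊢
    cases w with
    | x =>
      refine le_ncard_of_answers_subset hE hE' hM h.right hrank.1 hsat ?_
      rintro u' ⟨u, hu, huu'⟩
      exact ih hrank.2 hD' hDM hE hE' huu'.swap hu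
    | y =>
      refine le_ncard_of_answers_subset hE hE' hM h.left hrank.1 hsat ?_
      rintro u' ⟨u, hu, huu'⟩
      exact ih hrank.2 hD' hDM hE hE' huu' hu

end Game

section CyclicMiddle

variable {D : ℕ}

/-- The order on `Fin (2 * D + 3)` with the edge from `D` to `D + 2` reversed, so that the three
middle vertices form a cycle. -/
def cyclicMiddle (D : ℕ) (i j : Fin (2 * D + 3)) : Prop :=
  (i.1 < j.1 ∧ ¬ (i.1 = D ∧ j.1 = D + 2)) ∨ (i.1 = D + 2 ∧ j.1 = D)

lemma isOrderOffMiddle_lt (n M : ℕ) : IsOrderOffMiddle M (fun i j : Fin n => i < j) where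
  irrefl := lt_irrefl
  edge_iff_not_edge hne := by rw [not_lt, hne.le_iff_lt]
  edge_iff_lt _ := Iff.rfl

lemma isOrderOffMiddle_cyclicMiddle (D : ℕ) : IsOrderOffMiddle D (cyclicMiddle D) where
  irrefl v := by unfold cyclicMiddle; omega
  edge_iff_not_edge hne := by unfold cyclicMiddle; omega
  edge_iff_lt h := by unfold cyclicMiddle IsMiddle at *; omega

lemma isStrictLinearOrderRel_lt {V : Type} [LinearOrder V] :
    IsStrictLinearOrderRel (fun u v : V => u < v) :=
  ⟨lt_irrefl, fun _ _ _ => lt_trans, fun _ _ => lt_or_gt_of_ne⟩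

lemma not_isStrictLinearOrderRel_cyclicMiddle (D : ℕ) :
    ¬ IsStrictLinearOrderRel (cyclicMiddle D) := by
  rintro ⟨-, trans, -⟩
  have hpath := trans ⟨D, by omega⟩ ⟨D + 1, by omega⟩ ⟨D + 2, by omega⟩
  simp [cyclicMiddle] at hpath

lemma exists_pairAlike_lt_cyclicMiddle (a' b' : Fin (2 * D + 3)) :
    ∃ a b, PairAlike D (fun i j => i < j) (cyclicMiddle D) a b a' b' := by
  by_cases hrev : a'.1 = D ∧ b'.1 = D + 2 ∨ a'.1 = D + 2 ∧ b'.1 = D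
  · have hmid : IsMiddle D a' ∧ IsMiddle D b' := by unfold IsMiddle; omega
    have hne : a' ≠ b' := by omega
    refine ⟨b', a', .of_ne (isOrderOffMiddle_lt _ D).toIsTournament
      (isOrderOffMiddle_cyclicMiddle D).toIsTournament (.inr hmid.symm) (.inr hmid) hne.symm hne ?_⟩
    simp only [cyclicMiddle, Fin.lt_def]
    omega
  · refine ⟨a', b', .inl rfl, .inl rfl, Iff.rfl, ?_, ?_⟩ <;>
      simp only [cyclicMiddle, Fin.lt_def] <;> omega

lemma C2.sat_cyclicMiddle_of_forall_sat_lt {d : ℕ} {l : Fin d → Bool} {φ : C2 d}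
    (hD : φ.depth * φ.rank ≤ D)
    (hφ : ∀ α, C2.sat (fun i j : Fin (2 * D + 3) => i < j) (fun _ => l) φ α)
    (α' : C2Var → Fin (2 * D + 3)) : C2.sat (cyclicMiddle D) (fun _ => l) φ α' := by
  obtain ⟨a, b, hab⟩ := exists_pairAlike_lt_cyclicMiddle (α' .x) (α' .y)
  let α : C2Var → Fin (2 * D + 3) | .x => a | .y => b
  exact PairAlike.sat (α := α) le_rfl hD le_rfl (isOrderOffMiddle_lt _ _)
    (isOrderOffMiddle_cyclicMiddle _) hab (hφ α)

end CyclicMiddle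

theorem stmt16_general :
    (∃ σ : Language.graph.Sentence, ∀ (V : Type) (E : V → V → Prop),
        letI := dirStructure E; (σ.Realize V ↔ IsStrictLinearOrderRel E)) ∧
    (∃ φ : ℕ → C2 0, (∀ k, (φ k).freeVars = ∅) ∧
      ∀ (V : Type) [Fintype V] (E : V → V → Prop),
        ((∀ k, ∀ a : C2Var → V, C2.sat E noLab (φ k) a) ↔ IsStrictLinearOrderRel E)) ∧
    ¬ (∃ φ : C2 0, ∀ (V : Type) [Fintype V] (E : V → V → Prop), IsTournament E →
        ((∀ a : C2Var → V, C2.sat E noLab φ a) ↔ IsStrictLinearOrderRel E)) := by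
  refine ⟨⟨strictLinearOrderSentence, fun V E => realize_strictLinearOrderSentence E⟩,
    ⟨C2.totalAtMostOneInDegreeEq, C2.freeVars_totalAtMostOneInDegreeEq,
      fun V _ E => C2.forall_sat_totalAtMostOneInDegreeEq⟩, ?_⟩
  rintro ⟨φ, hφ⟩
  have hsat_lt (n : ℕ) (α : C2Var → Fin n) : C2.sat (fun i j => i < j) noLab φ α :=
    (hφ _ _ (isOrderOffMiddle_lt n 0).toIsTournament).2 isStrictLinearOrderRel_lt α
  exact not_isStrictLinearOrderRel_cyclicMiddle (φ.depth * φ.rank) <|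
    (hφ _ _ (isOrderOffMiddle_cyclicMiddle _).toIsTournament).1 <|
      C2.sat_cyclicMiddle_of_forall_sat_lt le_rfl (hsat_lt _)

/-- the class of finite directed graphs whose edge relation is a strict
linear order (a) is definable by a single first-order sentence in the language of one
binary relation, (b) is definable by a countable family of `C²` sentences, and (c) is not
definable by a single `C²` sentence. -/
theorem stmt16 :
    (∃ σ : Language.graph.Sentence,
      ∀ (V : Type) [Fintype V] (E : V → V → Prop), (∀ v, ¬ E v v) →
        (letI := dirStructure E; (σ.Realize V ↔ IsStrictLinearOrderRel E))) ∧
    (∃ φ : ℕ → C2 0, (∀ k, (φ k).freeVars = ∅) ∧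
      ∀ (V : Type) [Fintype V] (E : V → V → Prop), (∀ v, ¬ E v v) →
        ((∀ k, ∀ a : C2Var → V, C2.sat E noLab (φ k) a) ↔ IsStrictLinearOrderRel E)) ∧
    ¬ (∃ φ : C2 0, φ.freeVars = ∅ ∧
      ∀ (V : Type) [Fintype V] (E : V → V → Prop), (∀ v, ¬ E v v) →
        ((∀ a : C2Var → V, C2.sat E noLab φ a) ↔ IsStrictLinearOrderRel E)) := by
  obtain ⟨⟨σ, hσ⟩, ⟨φ, hfree, hφ⟩, hsingle⟩ := stmt16_general
  exact ⟨⟨σ, fun V _ E _ => hσ V E⟩, ⟨φ, hfree, fun V _ E _ => hφ V E⟩,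
    fun ⟨ψ, _, hψ⟩ => hsingle ⟨ψ, fun V _ E hE => hψ V E hE.irrefl⟩⟩
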